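/- For every β ≥ 0 and c ≥ 0, the thermodynamic limit of the quenched pressure exists: the sequence p_N(β,c) converges as N → ∞, its limit p(β,c) equals sup_{N∈ℕ} p_N(β,c), and p(β,c) ≤ 𝒫(β,c). -/

import Mathlib

open MeasureTheory Filter

/-- Poisson probability mass function with parameter `lam`. -/
noncomputable def poissonPMF (lam : ℝ) (k : ℕ) : ℝ :=
  Real.exp (-lam) * lam ^ k / (Nat.factorial k)

/-- Potts Hamiltonian `H_N(σ, J) = Σ_{i,j} J_{ij} δ(σ_i, σ_j)`. -/
noncomputable def potts.H (q N : ℕ) (σ : Fin N → Fin q) (J : Fin N → Fin N → ℝ) : ℝ :=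
  ∑ i, ∑ j, J i j * (if σ i = σ j then (1 : ℝ) else 0)

/-- Partition function `Z_N(J)`. -/
noncomputable def potts.Z (q N : ℕ) (J : Fin N → Fin N → ℝ) : ℝ :=
  ∑ σ : Fin N → Fin q, Real.exp (- potts.H q N σ J)

/-- Expectation over the Poissonian disorder: the entries `J_{ij}` are independent
Poisson random variables with means `c_{ij} / (2N)`. -/
noncomputable def potts.E (N : ℕ) (c : Fin N → Fin N → ℝ)
    (g : (Fin N → Fin N → ℕ) → ℝ) : ℝ :=
  ∑' J : Fin N → Fin N → ℕ,
    (∏ i, ∏ j, poissonPMF (c i j / (2 * N)) (J i j)) * g J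

/-- Quenched pressure for a general nonnegative connectivity matrix `c`. -/
noncomputable def potts.pmat (q N : ℕ) (β : ℝ) (c : Fin N → Fin N → ℝ) : ℝ :=
  potts.E N c (fun J => (1 / N) * Real.log (potts.Z q N (fun i j => β * (J i j : ℝ))))

/-- Quenched pressure for the constant connectivity matrix `c_{ij} ≡ c`. -/
noncomputable def potts.p (q N : ℕ) (β c : ℝ) : ℝ :=
  potts.pmat q N β (fun _ _ => c)

/-- Annealed pressure `𝒫(β, c) = ln q + (c/2) ln(1 - (1 - e^{-β})/q)`. -/
noncomputable def potts.annealed (q : ℕ) (β c : ℝ) : ℝ :=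
  Real.log q + (c / 2) * Real.log (1 - (1 - Real.exp (-β)) / q)

/-!
Conditionally on its number of points, a Poisson field arises by iterating the operator that adds
one random edge. These operators commute and preserve order, so two fields of equal total intensity
compare as soon as their one-edge operators do. Adding the edge `(i, j)` changes `log Z` by
`log (1 - (1 - e^{-β}) ⟨δ(σ_i, σ_j)⟩)`. The matrix `⟨δ(σ_i, σ_j)⟩` is positive semidefinite, hence
by Schur products and the power series of `-log (1 - t)` so is the matrix of minus these changes.
The intensity of two independent mean-field models exceeds that of the joint one by a rank-one
positive semidefinite matrix, so `N p_N` is superadditive and Fekete's lemma applies.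

For the annealed bound, Jensen's inequality for `Z` alone is not sharp enough: it ignores the
fluctuations of the number `|J|` of edges. Instead apply `log x ≤ x - 1` to `x = Z / (q^N r^|J|)`
with `r = 1 - (1 - e^{-β}) / q`. By Cauchy-Schwarz every configuration has at least `N² / q`
agreeing pairs of sites, which gives `𝔼 x ≤ 1`.
-/

lemma tendsto_ciSup_of_mul_superadditive {u : ℕ → ℝ}
    (hbdd : BddAbove (Set.range fun n => u (n + 1)))
    (hu : ∀ a b : ℕ, a * u a + b * u b ≤ (a + b : ℕ) * u (a + b)) :
    Tendsto u atTop (nhds (⨆ n, u (n + 1))) := by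
  have hsub : Subadditive fun n : ℕ => n * -u n := fun a b => by linarith [hu a b]
  have hdiv {n : ℕ} (hn : n ≠ 0) : (n * -u n) / (n : ℝ) = -u n :=
    mul_div_cancel_left₀ _ (Nat.cast_ne_zero.2 hn)
  have hle {n : ℕ} (hn : n ≠ 0) : u n ≤ ⨆ n, u (n + 1) := by
    obtain ⟨k, rfl⟩ := Nat.exists_eq_succ_of_ne_zero hn
    exact le_ciSup hbdd k
  have hbelow : BddBelow (Set.range fun n : ℕ => (n * -u n) / (n : ℝ)) := by
    refine ⟨min 0 (-⨆ n, u (n + 1)), Set.forall_mem_range.2 fun n => ?_⟩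
    obtain rfl | hn := eq_or_ne n 0
    · simp
    · rw [hdiv hn]
      exact min_le_of_right_le (neg_le_neg (hle hn))
  have hlim : Tendsto u atTop (nhds (-hsub.lim)) := by
    refine (hsub.tendsto_lim hbelow).neg.congr' ?_
    filter_upwards [eventually_ne_atTop 0] with n hn
    rw [hdiv hn, neg_neg]
  have hsup : -hsub.lim = ⨆ n, u (n + 1) := by
    refine le_antisymm (le_of_tendsto hlim ?_) (ciSup_le fun n => ?_)
    · filter_upwards [eventually_ne_atTop 0] with n hn using hle hn
    · have := hsub.lim_le_div hbelow n.succ_ne_zero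
      rw [hdiv n.succ_ne_zero] at this
      exact le_neg_of_le_neg this
  exact hsup ▸ hlim

section PosSemidef

variable {n : Type*} {A B : Matrix n n ℝ}

lemma posSemidef_map_pow [Finite n] (hA : A.PosSemidef) (k : ℕ) :
    (A.map (· ^ k)).PosSemidef := by
  induction k with
  | zero =>
    convert! Matrix.posSemidef_vecMulVec_self_star (1 : n → ℝ) using 1
    ext i j
    simp [Matrix.vecMulVec_apply]
  | succ k ih =>
    convert! ih.hadamard hA using 1

lemma sum_sum_mul_nonneg_of_posSemidef [Fintype n] (hA : A.PosSemidef) (hB : B.PosSemidef) :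
    0 ≤ ∑ i, ∑ j, A i j * B i j := by
  simpa [dotProduct, Matrix.mulVec] using (hA.hadamard hB).dotProduct_mulVec_nonneg 1

lemma posSemidef_map_of_hasSum_pow [Finite n] {f : ℝ → ℝ} {a : ℕ → ℝ} (ha : ∀ k, 0 ≤ a k)
    (hA : A.PosSemidef) (hf : ∀ i j, HasSum (fun k => a k * A i j ^ k) (f (A i j))) :
    (A.map f).PosSemidef := by
  have := Fintype.ofFinite n
  refine Matrix.PosSemidef.of_dotProduct_mulVec_nonneg ?_ fun x => ?_
  · exact hA.isHermitian.map f fun _ => rfl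
  · have hsum : HasSum (fun k => a k * (star x ⬝ᵥ (A.map (· ^ k)).mulVec x))
        (star x ⬝ᵥ (A.map f).mulVec x) := by
      simp only [dotProduct, Matrix.mulVec, Finset.mul_sum, Matrix.map_apply]
      refine hasSum_sum fun i _ => hasSum_sum fun j _ => ?_
      refine (((hf i j).mul_right (x j)).mul_left (star x i)).congr_fun fun k => ?_
      ring
    exact hsum.nonneg fun k =>
      mul_nonneg (ha k) ((posSemidef_map_pow hA k).dotProduct_mulVec_nonneg x)

lemma posSemidef_map_neg_log_one_sub [Finite n] (hA : A.PosSemidef)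
    (hA_lt : ∀ i j, |A i j| < 1) : (A.map fun t => -Real.log (1 - t)).PosSemidef := by
  refine posSemidef_map_of_hasSum_pow (a := fun k => 1 / k) (fun k => by positivity) hA
    fun i j => ?_
  refine (hasSum_nat_add_iff' 1).1 ?_
  simpa [div_eq_inv_mul] using Real.hasSum_pow_div_log_of_abs_lt_one (hA_lt i j)

end PosSemidef

section PoissonField

variable {ι κ : Type*} [Fintype ι] [Fintype κ] {m m' : ι → ℝ} {g g' : (ι → ℕ) → ℝ} {a b : ℝ}

/-- Joint mass function of a family `J` of independent Poisson variables with means `m`. -/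
noncomputable def poissonWeight (m : ι → ℝ) (J : ι → ℕ) : ℝ :=
  ∏ e, poissonPMF (m e) (J e)

/-- The random variable `g` of independent Poisson variables with means `m` is integrable with
expectation `a`. -/
def HasPoissonExp (m : ι → ℝ) (g : (ι → ℕ) → ℝ) (a : ℝ) : Prop :=
  HasSum (fun J => poissonWeight m J * g J) a

lemma poissonWeight_nonneg (hm : 0 ≤ m) (J : ι → ℕ) : 0 ≤ poissonWeight m J :=
  Finset.prod_nonneg fun e _ => by
    have := hm e
    simp only [Pi.zero_apply] at this
    unfold poissonPMF
    positivity

lemma poissonWeight_eq (m : ι → ℝ) (J : ι → ℕ) :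
    poissonWeight m J = Real.exp (-∑ e, m e) * ∏ e, m e ^ J e / (J e).factorial := by
  simp only [poissonWeight, poissonPMF, mul_div_assoc, Finset.prod_mul_distrib, ← Real.exp_sum,
    Finset.sum_neg_distrib]

lemma eq_zero_of_poissonWeight_ne_zero {J : ι → ℕ} (hJ : poissonWeight m J ≠ 0) {e : ι}
    (he : m e = 0) : J e = 0 := by
  by_contra hJe
  refine hJ (Finset.prod_eq_zero (Finset.mem_univ e) ?_)
  simp [poissonPMF, he, hJe]

lemma poissonWeight_mul_prod_pow (m t : ι → ℝ) (J : ι → ℕ) :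
    poissonWeight m J * ∏ e, t e ^ J e =
      Real.exp (∑ e, m e * (t e - 1)) * poissonWeight (fun e => m e * t e) J := by
  rw [poissonWeight_eq, poissonWeight_eq, mul_assoc, ← Finset.prod_mul_distrib, ← mul_assoc,
    ← Real.exp_add]
  congr 1
  · congr 1
    simp only [mul_sub, mul_one, Finset.sum_sub_distrib]
    ring
  · exact Finset.prod_congr rfl fun e _ => by ring

lemma hasSum_poissonPMF (r : ℝ) : HasSum (poissonPMF r) 1 := by
  have hexp := (NormedSpace.expSeries_div_hasSum_exp r).mul_left (Real.exp (-r))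
  rw [← Real.exp_eq_exp_ℝ, ← Real.exp_add, neg_add_cancel, Real.exp_zero] at hexp
  exact hexp.congr_fun fun k => mul_div_assoc _ _ _

lemma add_one_mul_poissonPMF_add_one (r : ℝ) (k : ℕ) :
    (k + 1 : ℝ) * poissonPMF r (k + 1) = r * poissonPMF r k := by
  rw [poissonPMF, poissonPMF, Nat.factorial_succ]
  push_cast
  field_simp
  ring

namespace HasPoissonExp

lemma add (hg : HasPoissonExp m g a) (hg' : HasPoissonExp m g' b) :
    HasPoissonExp m (fun J => g J + g' J) (a + b) := by
  simpa only [HasPoissonExp, mul_add] using HasSum.add hg hg'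

lemma const_mul (r : ℝ) (hg : HasPoissonExp m g a) :
    HasPoissonExp m (fun J => r * g J) (r * a) := by
  simpa only [HasPoissonExp, mul_left_comm] using HasSum.mul_left r hg

lemma finset_sum {α : Type*} {s : Finset α} {g : α → (ι → ℕ) → ℝ} {a : α → ℝ}
    (hg : ∀ i ∈ s, HasPoissonExp m (g i) (a i)) :
    HasPoissonExp m (fun J => ∑ i ∈ s, g i J) (∑ i ∈ s, a i) := by
  simpa only [HasPoissonExp, Finset.mul_sum] using hasSum_sum hg

lemma mono (hm : 0 ≤ m) (hg : HasPoissonExp m g a) (hg' : HasPoissonExp m g' b)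
    (hle : ∀ J, g J ≤ g' J) : a ≤ b :=
  hasSum_le (fun J => mul_le_mul_of_nonneg_left (hle J) (poissonWeight_nonneg hm J)) hg hg'

lemma congr_of_support (hg : HasPoissonExp m g a)
    (h : ∀ J, (∀ e, m e = 0 → J e = 0) → g' J = g J) : HasPoissonExp m g' a := by
  refine HasSum.congr_fun hg fun J => ?_
  by_cases hJ : poissonWeight m J = 0
  · simp only [hJ, zero_mul]
  · rw [h J fun e => eq_zero_of_poissonWeight_ne_zero hJ]

end HasPoissonExp

section Mecke

variable [DecidableEq ι]

lemma add_one_mul_poissonWeight_add_single (m : ι → ℝ) (J : ι → ℕ) (e : ι) :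
    (J e + 1 : ℝ) * poissonWeight m (J + Pi.single e 1) = m e * poissonWeight m J := by
  have hrest : ∏ f ∈ {e}ᶜ, poissonPMF (m f) ((J + Pi.single e 1 : ι → ℕ) f) =
      ∏ f ∈ {e}ᶜ, poissonPMF (m f) (J f) :=
    Finset.prod_congr rfl fun f hf => by
      rw [Pi.add_apply, Pi.single_eq_of_ne (by simpa using hf), add_zero]
  rw [poissonWeight, poissonWeight, Fintype.prod_eq_mul_prod_compl e,
    Fintype.prod_eq_mul_prod_compl e, hrest, Pi.add_apply, Pi.single_eq_same, ← mul_assoc,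
    ← mul_assoc, add_one_mul_poissonPMF_add_one]

/-- The Mecke equation `𝔼[J_e g(J)] = m_e 𝔼[g(J + 1_e)]`. -/
lemma HasPoissonExp.coord_mul {e : ι} (h : HasPoissonExp m (fun J => g (J + Pi.single e 1)) a) :
    HasPoissonExp m (fun J => J e * g J) (m e * a) := by
  have hinj : Function.Injective fun J : ι → ℕ => J + Pi.single e 1 := add_left_injective _
  refine (hinj.hasSum_iff fun J hJ => ?_).1
    (HasSum.congr_fun (h.const_mul (m e)) fun J => ?_)
  · have hJe : J e = 0 := by
      by_contra hne
      refine hJ ⟨J - Pi.single e 1, tsub_add_cancel_of_le fun f => ?_⟩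
      obtain rfl | hf := eq_or_ne f e
      · simpa using Nat.one_le_iff_ne_zero.2 hne
      · simp [hf]
    simp [hJe]
  · have := add_one_mul_poissonWeight_add_single m J e
    simp only [Function.comp_apply, Pi.add_apply, Pi.single_eq_same, Nat.cast_add, Nat.cast_one]
    linear_combination g (J + Pi.single e 1) * this

/-- The operator `g ↦ (J ↦ ∑ₑ mₑ g(J + 1ₑ))` adding one point, drawn with intensity `m`. -/
noncomputable def addPoint (m : ι → ℝ) : Module.End ℝ ((ι → ℕ) → ℝ) :=
  ∑ e, m e • LinearMap.funLeft ℝ ℝ (· + Pi.single e 1)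

lemma addPoint_eq_sum_smul (m : ι → ℝ) (g : (ι → ℕ) → ℝ) :
    addPoint m g = ∑ e, m e • fun J => g (J + Pi.single e 1) := by
  simp only [addPoint, LinearMap.sum_apply, LinearMap.smul_apply]
  rfl

lemma addPoint_apply (m : ι → ℝ) (g : (ι → ℕ) → ℝ) (J : ι → ℕ) :
    addPoint m g J = ∑ e, m e * g (J + Pi.single e 1) := by
  simp [addPoint_eq_sum_smul]

lemma addPoint_commute (m m' : ι → ℝ) : Function.Commute (addPoint m) (addPoint m') := by
  intro g
  ext J
  simp only [addPoint_apply, Finset.mul_sum]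
  rw [Finset.sum_comm]
  simp only [mul_left_comm, add_right_comm]

lemma addPoint_monotone (hm : 0 ≤ m) : Monotone (addPoint m) := fun g g' hgg' J => by
  simp only [addPoint_apply]
  exact Finset.sum_le_sum fun e _ => mul_le_mul_of_nonneg_left (hgg' _) (hm e)

lemma addPoint_pow_one (m : ι → ℝ) (M : ℕ) (J : ι → ℕ) :
    (addPoint m ^ M) 1 J = (∑ e, m e) ^ M := by
  induction M generalizing J with
  | zero => simp
  | succ M ih =>
    rw [pow_succ', Module.End.mul_apply, addPoint_apply]
    simp only [ih, ← Finset.sum_mul, pow_succ']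

/-- Conditionally on `∑ J = M`, the field `J` is the result of adding `M` independent points. -/
lemma hasPoissonExp_indicator_sum_eq (m : ι → ℝ) (M : ℕ) (g : (ι → ℕ) → ℝ) :
    HasPoissonExp m ({J | ∑ e, J e = M}.indicator g)
      (Real.exp (-∑ e, m e) / M.factorial * (addPoint m ^ M) g 0) := by
  induction M generalizing g with
  | zero =>
    have hzero : HasPoissonExp m ({J | ∑ e, J e = 0}.indicator g)
        (poissonWeight m 0 * {J : ι → ℕ | ∑ e, J e = 0}.indicator g 0) :=
      hasSum_single 0 fun J hJ => by
        rw [Set.indicator_of_notMem (by simpa [funext_iff] using hJ), mul_zero]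
    simpa [poissonWeight_eq] using hzero
  | succ M ih =>
    let G : (ι → ℕ) → ℝ := {J | ∑ e, J e = M + 1}.indicator g
    have hshift (e : ι) : (fun J => G (J + Pi.single e 1)) =
        {J : ι → ℕ | ∑ e, J e = M}.indicator (fun J => g (J + Pi.single e 1)) := by
      ext J
      simp [G, Set.indicator_apply, Finset.sum_add_distrib]
    have hcoord (e : ι) := HasPoissonExp.coord_mul (g := G) (hshift e ▸ ih _)
    have hsum := (HasPoissonExp.finset_sum fun e (_ : e ∈ Finset.univ) => hcoord e).const_mul
      (M + 1 : ℝ)⁻¹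
    have hG (J : ι → ℕ) : (M + 1 : ℝ)⁻¹ * ∑ e, J e * G J = G J := by
      by_cases hJ : ∑ e, J e = M + 1
      · have hJ' : ∑ e, (J e : ℝ) = M + 1 := by exact_mod_cast hJ
        rw [← Finset.sum_mul, hJ', inv_mul_cancel_left₀ (by positivity)]
      · simp [G, hJ]
    have hpow : (addPoint m ^ (M + 1)) g 0 =
        ∑ e, m e * (addPoint m ^ M) (fun J => g (J + Pi.single e 1)) 0 := by
      rw [pow_succ, Module.End.mul_apply, addPoint_eq_sum_smul]
      simp
    simp only [hG] at hsum
    convert hsum using 1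
    rw [hpow, Nat.factorial_succ, Finset.mul_sum, Finset.mul_sum]
    refine Finset.sum_congr rfl fun e _ => ?_
    push_cast
    field_simp

lemma HasPoissonExp.hasSum_addPoint_pow (hg : HasPoissonExp m g a) :
    HasSum (fun M : ℕ => Real.exp (-∑ e, m e) / M.factorial * (addPoint m ^ M) g 0) a := by
  refine (hg.tsum_fiberwise fun J => ∑ e, J e).congr_fun fun M => ?_
  rw [← (hasPoissonExp_indicator_sum_eq m M g).tsum_eq]
  simp only [← Set.indicator_mul_right]
  exact (tsum_subtype {J : ι → ℕ | ∑ e, J e = M} fun J => poissonWeight m J * g J).symm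

lemma HasPoissonExp.le_of_addPoint_le (hm : 0 ≤ m) (hm' : 0 ≤ m') (hsum : ∑ e, m e = ∑ e, m' e)
    (hle : addPoint m g ≤ addPoint m' g) (ha : HasPoissonExp m g a) (hb : HasPoissonExp m' g b) :
    a ≤ b := by
  refine hasSum_le (fun M => ?_) ha.hasSum_addPoint_pow hb.hasSum_addPoint_pow
  rw [hsum, Module.End.pow_apply, Module.End.pow_apply]
  have := (addPoint_commute m m').iterate_le_of_map_le (addPoint_monotone hm)
    (addPoint_monotone hm') hle M 0
  gcongr

end Mecke

lemma hasSum_poissonWeight_sum_eq (m : ι → ℝ) (M : ℕ) :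
    HasSum (fun J : {J : ι → ℕ | ∑ e, J e = M} => poissonWeight m J)
      (poissonPMF (∑ e, m e) M) := by
  classical
  have hind := hasPoissonExp_indicator_sum_eq m M 1
  rw [addPoint_pow_one, div_mul_eq_mul_div] at hind
  refine (hasSum_subtype_iff_indicator (f := poissonWeight m)).2 (hind.congr_fun fun J => ?_)
  simp [Set.indicator_apply]

lemma hasPoissonExp_one (hm : 0 ≤ m) : HasPoissonExp m (fun _ => 1) 1 := by
  have hsummable : Summable (poissonWeight m) :=
    (summable_partition (poissonWeight_nonneg hm) fun J => by simp).2
      ⟨fun M => (hasSum_poissonWeight_sum_eq m M).summable, by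
        simpa only [(hasSum_poissonWeight_sum_eq m _).tsum_eq] using
          (hasSum_poissonPMF (∑ e, m e)).summable⟩
  have htotal : HasSum (poissonPMF (∑ e, m e)) (∑' J, poissonWeight m J) :=
    (hsummable.hasSum.tsum_fiberwise fun J => ∑ e, J e).congr_fun fun M =>
      (hasSum_poissonWeight_sum_eq m M).tsum_eq.symm
  have hmass := hsummable.hasSum
  rw [htotal.unique (hasSum_poissonPMF _)] at hmass
  simpa only [HasPoissonExp, mul_one] using hmass

lemma hasPoissonExp_const (hm : 0 ≤ m) (r : ℝ) : HasPoissonExp m (fun _ => r) r := by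
  simpa using (hasPoissonExp_one hm).const_mul r

lemma hasPoissonExp_prod_pow {t : ι → ℝ} (hm : 0 ≤ m) (ht : 0 ≤ t) :
    HasPoissonExp m (fun J => ∏ e, t e ^ J e) (Real.exp (∑ e, m e * (t e - 1))) := by
  have hmass := (hasPoissonExp_one (mul_nonneg hm ht)).mul_left (Real.exp (∑ e, m e * (t e - 1)))
  simp only [mul_one] at hmass
  exact hmass.congr_fun fun J => poissonWeight_mul_prod_pow m t J

lemma hasPoissonExp_sum (hm : 0 ≤ m) :
    HasPoissonExp m (fun J => ∑ e, (J e : ℝ)) (∑ e, m e) := by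
  classical
  have hcoord (e : ι) : HasPoissonExp m (fun J => (J e : ℝ)) (m e) := by
    simpa using (hasPoissonExp_one hm).coord_mul (e := e) (g := fun _ => 1)
  exact HasPoissonExp.finset_sum fun e _ => hcoord e

lemma exists_hasPoissonExp_of_abs_le (hm : 0 ≤ m) {A B : ℝ}
    (hg : ∀ J, |g J| ≤ A + B * ∑ e, (J e : ℝ)) : ∃ a, HasPoissonExp m g a := by
  have hbound := (hasPoissonExp_const hm A).add ((hasPoissonExp_sum hm).const_mul B)
  refine Summable.of_norm_bounded hbound.summable fun J => ?_
  rw [Real.norm_eq_abs, abs_mul, abs_of_nonneg (poissonWeight_nonneg hm J)]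
  exact mul_le_mul_of_nonneg_left (hg J) (poissonWeight_nonneg hm J)

lemma HasPoissonExp.comp_equiv {m : κ → ℝ} (f : ι ≃ κ) (hg : HasPoissonExp (m ∘ f) g a) :
    HasPoissonExp m (fun J => g (J ∘ f)) a := by
  refine (f.arrowCongr (Equiv.refl ℕ)).hasSum_iff.1 (HasSum.congr_fun hg fun J => ?_)
  have hJ : f.arrowCongr (Equiv.refl ℕ) J ∘ f = J := by ext; simp
  simp only [Function.comp_apply, hJ, poissonWeight, ← f.prod_comp fun e => poissonPMF (m e) _]
  simp

lemma HasPoissonExp.comp_inl {m : ι ⊕ κ → ℝ} (hm : 0 ≤ m ∘ Sum.inr)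
    (hg : HasPoissonExp (m ∘ Sum.inl) g a) : HasPoissonExp m (fun J => g (J ∘ Sum.inl)) a := by
  have hmass := hasPoissonExp_one hm
  have hprod := HasSum.mul hg hmass (summable_mul_of_summable_norm hg.summable.norm
    hmass.summable.norm)
  rw [mul_one] at hprod
  refine (Equiv.sumArrowEquivProdArrow ι κ ℕ).symm.hasSum_iff.1 (hprod.congr_fun fun J => ?_)
  simp only [Function.comp_apply, poissonWeight, Fintype.prod_sum_type, mul_one]
  exact mul_right_comm _ _ _

lemma HasPoissonExp.comp_injective {m : κ → ℝ} (hm : 0 ≤ m) {f : ι → κ}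
    (hf : Function.Injective f) (hg : HasPoissonExp (m ∘ f) g a) :
    HasPoissonExp m (fun J => g (J ∘ f)) a := by
  classical
  let φ : ι ⊕ ↥(Set.range f)ᶜ ≃ κ :=
    ((Equiv.ofInjective f hf).sumCongr (Equiv.refl _)).trans (Equiv.Set.sumCompl (Set.range f))
  have hinl : HasPoissonExp (m ∘ φ) (fun J => g (J ∘ Sum.inl)) a :=
    HasPoissonExp.comp_inl (fun e => hm _) hg
  exact hinl.comp_equiv φ

end PoissonField

namespace potts

section Intensity

variable {V W : Type*}

/-- Edge intensities of the disjoint union of two models with intensities `m` and `m'`. -/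
def decoupled (m : V × V → ℝ) (m' : W × W → ℝ) : (V ⊕ W) × (V ⊕ W) → ℝ
  | (.inl i, .inl j) => m (i, j)
  | (.inr i, .inr j) => m' (i, j)
  | _ => 0

lemma decoupled_nonneg {m : V × V → ℝ} {m' : W × W → ℝ} (hm : 0 ≤ m) (hm' : 0 ≤ m') :
    0 ≤ decoupled m m' := by
  rintro ⟨_ | _, _ | _⟩
  · exact hm _
  · exact le_rfl
  · exact le_rfl
  · exact hm' _

variable [Fintype V] [Fintype W] {c : ℝ}

lemma sum_decoupled (m : V × V → ℝ) (m' : W × W → ℝ) :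
    ∑ e, decoupled m m' e = ∑ e, m e + ∑ e, m' e := by
  simp [Fintype.sum_prod_type, decoupled]

/-- Edge intensities `c / (2|V|)` of the mean-field model of connectivity `c`; in the degenerate
case `V = ∅` there are no edges. -/
noncomputable def meanField (V : Type*) [Fintype V] (c : ℝ) : V × V → ℝ :=
  fun _ => c / (2 * Fintype.card V)

lemma meanField_nonneg (hc : 0 ≤ c) : 0 ≤ meanField V c := fun _ => by
  simp only [Pi.zero_apply, meanField]
  positivity

variable (V) in
lemma sum_meanField (c : ℝ) :
    ∑ e, meanField V c e = c / 2 * Fintype.card V := by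
  obtain hV | hV := eq_or_ne (Fintype.card V : ℝ) 0
  · simp [meanField, hV]
  · simp only [meanField, Finset.sum_const, Finset.card_univ, Fintype.card_prod, nsmul_eq_mul]
    push_cast
    field_simp

lemma decoupled_sub_meanField_posSemidef [Nonempty V] [Nonempty W] (hc : 0 ≤ c) :
    (Matrix.of fun i j => decoupled (meanField V c) (meanField W c) (i, j) -
      meanField (V ⊕ W) c (i, j)).PosSemidef := by
  let a : ℝ := Fintype.card V
  let b : ℝ := Fintype.card W
  let u : V ⊕ W → ℝ := Sum.elim (fun _ => b) fun _ => -a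
  have hrank_one : (Matrix.of fun i j => decoupled (meanField V c) (meanField W c) (i, j) -
      meanField (V ⊕ W) c (i, j)) = (c / (2 * a * b * (a + b))) • Matrix.vecMulVec u (star u) := by
    ext (_ | _) (_ | _) <;> simp [decoupled, meanField, Matrix.vecMulVec_apply, u, a, b] <;>
      field_simp <;> ring
  rw [hrank_one]
  exact (Matrix.posSemidef_vecMulVec_self_star u).smul (by positivity)

end Intensity

section EdgeFactor

variable {V S : Type*} [DecidableEq S]

/-- Boltzmann factor of a single edge `e` of unit multiplicity in the spin configuration `σ`. -/
noncomputable def edgeFactor (β : ℝ) (σ : V → S) (e : V × V) : ℝ :=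
  if σ e.1 = σ e.2 then Real.exp (-β) else 1

lemma edgeFactor_eq (β : ℝ) (σ : V → S) (e : V × V) :
    edgeFactor β σ e = 1 - (1 - Real.exp (-β)) * (1 : Matrix S S ℝ) (σ e.1) (σ e.2) := by
  by_cases h : σ e.1 = σ e.2 <;> simp [edgeFactor, Matrix.one_apply, h]

lemma edgeFactor_pos (β : ℝ) (σ : V → S) (e : V × V) : 0 < edgeFactor β σ e := by
  unfold edgeFactor
  split_ifs <;> positivity

lemma edgeFactor_mem_Icc {β : ℝ} (hβ : 0 ≤ β) (σ : V → S) (e : V × V) :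
    edgeFactor β σ e ∈ Set.Icc (Real.exp (-β)) 1 := by
  have hexp : Real.exp (-β) ≤ 1 := Real.exp_le_one_iff.2 (neg_nonpos.2 hβ)
  unfold edgeFactor
  split_ifs
  · exact Set.left_mem_Icc.2 hexp
  · exact Set.right_mem_Icc.2 hexp

variable [Fintype V]

/-- Boltzmann weight of `σ` on the multigraph in which the edge `e` has multiplicity `J e`. -/
noncomputable def gibbsWeight (β : ℝ) (J : V × V → ℕ) (σ : V → S) : ℝ :=
  ∏ e, edgeFactor β σ e ^ J e

lemma gibbsWeight_pos (β : ℝ) (J : V × V → ℕ) (σ : V → S) : 0 < gibbsWeight β J σ :=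
  Finset.prod_pos fun e _ => pow_pos (edgeFactor_pos β σ e) _

lemma hasPoissonExp_gibbsWeight_div {m : V × V → ℝ} {β r : ℝ} (hm : 0 ≤ m) (hr : 0 ≤ r)
    (σ : V → S) : HasPoissonExp m (fun J => gibbsWeight β J σ / r ^ ∑ e, J e)
      (Real.exp (∑ e, m e * (edgeFactor β σ e / r - 1))) := by
  convert! hasPoissonExp_prod_pow hm fun e => div_nonneg (edgeFactor_pos β σ e).le hr using 2
  simp only [gibbsWeight, div_pow, Finset.prod_div_distrib, Finset.prod_pow_eq_pow_sum]

lemma gibbsWeight_add_single [DecidableEq V] (β : ℝ) (J : V × V → ℕ) (σ : V → S) (e : V × V) :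
    gibbsWeight β (J + Pi.single e 1) σ = gibbsWeight β J σ * edgeFactor β σ e := by
  simp only [gibbsWeight, Pi.add_apply, pow_add, Finset.prod_mul_distrib]
  congr 1
  rw [Fintype.prod_eq_single e fun f hf => by simp [hf], Pi.single_eq_same, pow_one]

end EdgeFactor

section AnnealedFactor

variable {V S : Type*} [Fintype V] [Fintype S] [DecidableEq S]

/-- The average of `edgeFactor` over two independent uniform spins. -/
noncomputable def annealedFactor (S : Type*) [Fintype S] (β : ℝ) : ℝ :=
  1 - (1 - Real.exp (-β)) / Fintype.card S

lemma one_sub_exp_neg_mem_Ico {β : ℝ} (hβ : 0 ≤ β) : 1 - Real.exp (-β) ∈ Set.Ico (0 : ℝ) 1 :=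
  ⟨sub_nonneg.2 (Real.exp_le_one_iff.2 (neg_nonpos.2 hβ)), sub_lt_self 1 (Real.exp_pos _)⟩

lemma annealedFactor_pos (S : Type*) [Fintype S] {β : ℝ} (hβ : 0 ≤ β) : 0 < annealedFactor S β := by
  obtain ⟨hx, hx'⟩ := one_sub_exp_neg_mem_Ico hβ
  obtain hS | hS := Nat.eq_zero_or_pos (Fintype.card S)
  · simp [annealedFactor, hS]
  · have hS' : (1 : ℝ) ≤ Fintype.card S := Nat.one_le_cast.2 hS
    exact sub_pos.2 ((div_le_self hx hS').trans_lt hx')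

lemma sq_card_le_card_mul_sum_one (σ : V → S) : (Fintype.card V : ℝ) ^ 2 ≤
    Fintype.card S * ∑ e : V × V, (1 : Matrix S S ℝ) (σ e.1) (σ e.2) := by
  have hcount : ∑ s, ∑ i, (1 : Matrix S S ℝ) (σ i) s = Fintype.card V := by
    rw [Finset.sum_comm]
    simp [Matrix.one_apply]
  have hsq : ∑ s, (∑ i, (1 : Matrix S S ℝ) (σ i) s) ^ 2 =
      ∑ e : V × V, (1 : Matrix S S ℝ) (σ e.1) (σ e.2) := by
    simp only [sq, Finset.sum_mul_sum, Fintype.sum_prod_type]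
    rw [Finset.sum_comm]
    refine Finset.sum_congr rfl fun i _ => ?_
    rw [Finset.sum_comm]
    simp [Matrix.one_apply, eq_comm]
  rw [← hcount, ← hsq]
  exact sq_sum_le_card_mul_sum_sq

lemma sum_edgeFactor_le [Nonempty S] {β : ℝ} (hβ : 0 ≤ β) (σ : V → S) :
    ∑ e, edgeFactor β σ e ≤ (Fintype.card V : ℝ) ^ 2 * annealedFactor S β := by
  have hS : (0 : ℝ) < Fintype.card S := Nat.cast_pos.2 Fintype.card_pos
  have hagree := mul_le_mul_of_nonneg_left ((div_le_iff₀' hS).2 (sq_card_le_card_mul_sum_one σ))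
    (one_sub_exp_neg_mem_Ico hβ).1
  calc ∑ e, edgeFactor β σ e = (Fintype.card V : ℝ) ^ 2 -
        (1 - Real.exp (-β)) * ∑ e : V × V, (1 : Matrix S S ℝ) (σ e.1) (σ e.2) := by
        simp [edgeFactor_eq, ← Finset.mul_sum, sq]
    _ ≤ (Fintype.card V : ℝ) ^ 2 - (1 - Real.exp (-β)) * ((Fintype.card V : ℝ) ^ 2 /
        Fintype.card S) := by gcongr
    _ = (Fintype.card V : ℝ) ^ 2 * annealedFactor S β := by
        unfold annealedFactor
        ring

end AnnealedFactor

section PartitionFunction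

variable {V W S : Type*} [Fintype V] [DecidableEq V] [Fintype W] [DecidableEq W] [Fintype S]
  [DecidableEq S]

variable (S) in
/-- The partition function `Z(βJ)` over an arbitrary finite set `V` of sites and `S` of spins. -/
noncomputable def partitionFn (β : ℝ) (J : V × V → ℕ) : ℝ :=
  ∑ σ : V → S, gibbsWeight β J σ

variable (S) in
/-- Matrix of the Gibbs probabilities that two sites carry the same spin. -/
noncomputable def agreement (β : ℝ) (J : V × V → ℕ) : Matrix V V ℝ :=
  ∑ σ : V → S, (gibbsWeight β J σ / partitionFn S β J) • (1 : Matrix S S ℝ).submatrix σ σ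

lemma partitionFn_pos [Nonempty S] (β : ℝ) (J : V × V → ℕ) : 0 < partitionFn S β J :=
  Finset.sum_pos (fun σ _ => gibbsWeight_pos β J σ) Finset.univ_nonempty

lemma partitionFn_comp_equiv (f : V ≃ W) (β : ℝ) (J : W × W → ℕ) :
    partitionFn S β (J ∘ f.prodCongr f) = partitionFn S β J := by
  refine Fintype.sum_equiv (f.arrowCongr (Equiv.refl S)) _ _ fun σ =>
    Fintype.prod_equiv (f.prodCongr f) _ _ fun e => ?_
  simp [edgeFactor]

lemma partitionFn_sum {J : (V ⊕ W) × (V ⊕ W) → ℕ} (hVW : ∀ v w, J (.inl v, .inr w) = 0)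
    (hWV : ∀ w v, J (.inr w, .inl v) = 0) (β : ℝ) :
    partitionFn S β J = partitionFn S β (J ∘ Prod.map Sum.inl Sum.inl) *
      partitionFn S β (J ∘ Prod.map Sum.inr Sum.inr) := by
  simp only [partitionFn, Finset.sum_mul_sum]
  rw [← (Equiv.sumArrowEquivProdArrow V W S).symm.sum_comp, Fintype.sum_prod_type]
  refine Finset.sum_congr rfl fun σ _ => Finset.sum_congr rfl fun τ _ => ?_
  simp only [gibbsWeight, Fintype.prod_prod_type, Fintype.prod_sum_type, hVW, hWV, pow_zero,
    Finset.prod_const_one, mul_one, one_mul]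
  rfl

section Bounds

variable {β : ℝ} (J : V × V → ℕ)

lemma partitionFn_le (hβ : 0 ≤ β) : partitionFn S β J ≤ Fintype.card S ^ Fintype.card V := by
  have hle (σ : V → S) : gibbsWeight β J σ ≤ 1 :=
    Finset.prod_le_one (fun e _ => (pow_pos (edgeFactor_pos β σ e) _).le)
      fun e _ => pow_le_one₀ (edgeFactor_pos β σ e).le (edgeFactor_mem_Icc hβ σ e).2
  simpa [partitionFn] using Finset.sum_le_card_nsmul Finset.univ _ 1 fun σ _ => hle σ

lemma exp_le_partitionFn [Nonempty S] (hβ : 0 ≤ β) :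
    Real.exp (-β * ∑ e, (J e : ℝ)) ≤ partitionFn S β J := by
  have σ : V → S := Classical.arbitrary _
  calc Real.exp (-β * ∑ e, (J e : ℝ)) = ∏ e, Real.exp (-β) ^ J e := by
        simp only [Finset.mul_sum, Real.exp_sum, ← Real.exp_nat_mul, mul_comm]
    _ ≤ gibbsWeight β J σ :=
        Finset.prod_le_prod (fun e _ => by positivity) fun e _ => by
          gcongr
          exact (edgeFactor_mem_Icc hβ σ e).1
    _ ≤ partitionFn S β J :=
        Finset.single_le_sum (fun τ _ => (gibbsWeight_pos β J τ).le) (Finset.mem_univ σ)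

lemma abs_log_partitionFn_le [Nonempty S] (hβ : 0 ≤ β) : |Real.log (partitionFn S β J)| ≤
    Fintype.card V * Real.log (Fintype.card S) + β * ∑ e, (J e : ℝ) := by
  have hupper := Real.log_le_log (partitionFn_pos β J) (partitionFn_le (S := S) J hβ)
  have hlower := (Real.le_log_iff_exp_le (partitionFn_pos β J)).2 (exp_le_partitionFn (S := S) J hβ)
  rw [Real.log_pow] at hupper
  have hcard : 0 ≤ Fintype.card V * Real.log (Fintype.card S) := by positivity
  have hJ : 0 ≤ β * ∑ e, (J e : ℝ) := by positivity
  exact abs_le.2 ⟨by linarith, by linarith⟩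

end Bounds

section Agreement

variable (β : ℝ) (J : V × V → ℕ)

lemma agreement_apply (i j : V) : agreement S β J i j =
    ∑ σ : V → S, gibbsWeight β J σ / partitionFn S β J * (1 : Matrix S S ℝ) (σ i) (σ j) := by
  simp [agreement, Matrix.sum_apply]

variable [Nonempty S]

lemma agreement_posSemidef : (agreement S β J).PosSemidef :=
  Matrix.posSemidef_sum _ fun σ _ => (Matrix.PosSemidef.one.submatrix σ).smul
    (div_pos (gibbsWeight_pos β J σ) (partitionFn_pos β J)).le

lemma agreement_nonneg (i j : V) : 0 ≤ agreement S β J i j := by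
  rw [agreement_apply]
  refine Finset.sum_nonneg fun σ _ =>
    mul_nonneg (div_pos (gibbsWeight_pos β J σ) (partitionFn_pos β J)).le ?_
  rw [Matrix.one_apply]
  positivity

lemma agreement_le_one (i j : V) : agreement S β J i j ≤ 1 := by
  calc agreement S β J i j ≤ ∑ σ : V → S, gibbsWeight β J σ / partitionFn S β J := by
        rw [agreement_apply]
        refine Finset.sum_le_sum fun σ _ => mul_le_of_le_one_right
          (div_pos (gibbsWeight_pos β J σ) (partitionFn_pos β J)).le ?_
        rw [Matrix.one_apply]
        split_ifs <;> norm_num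
    _ = 1 := by rw [← Finset.sum_div, ← partitionFn, div_self (partitionFn_pos β J).ne']

lemma partitionFn_add_single (e : V × V) : partitionFn S β (J + Pi.single e 1) =
    partitionFn S β J * (1 - (1 - Real.exp (-β)) * agreement S β J e.1 e.2) := by
  have hagree : partitionFn S β J * agreement S β J e.1 e.2 =
      ∑ σ : V → S, gibbsWeight β J σ * (1 : Matrix S S ℝ) (σ e.1) (σ e.2) := by
    rw [agreement_apply, Finset.mul_sum]
    exact Finset.sum_congr rfl fun σ _ => by
      rw [← mul_assoc, mul_div_cancel₀ _ (partitionFn_pos β J).ne']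
  rw [mul_sub, mul_one, mul_left_comm, hagree, partitionFn, partitionFn, Finset.mul_sum,
    ← Finset.sum_sub_distrib]
  refine Finset.sum_congr rfl fun σ _ => ?_
  rw [gibbsWeight_add_single, edgeFactor_eq]
  ring

variable {β}

lemma one_sub_mul_agreement_lt (hβ : 0 ≤ β) (i j : V) :
    (1 - Real.exp (-β)) * agreement S β J i j < 1 :=
  mul_lt_one_of_nonneg_of_lt_one_left (one_sub_exp_neg_mem_Ico hβ).1
    (one_sub_exp_neg_mem_Ico hβ).2 (agreement_le_one β J i j)

lemma addPoint_log_partitionFn_le (hβ : 0 ≤ β) {m m' : V × V → ℝ} (hsum : ∑ e, m e = ∑ e, m' e)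
    (hm : (Matrix.of fun i j => m (i, j) - m' (i, j)).PosSemidef) :
    addPoint m (fun J => Real.log (partitionFn S β J)) ≤
      addPoint m' (fun J => Real.log (partitionFn S β J)) := by
  intro J
  let A := (1 - Real.exp (-β)) • agreement S β J
  have hA_nonneg (i j : V) : 0 ≤ A i j :=
    mul_nonneg (one_sub_exp_neg_mem_Ico hβ).1 (agreement_nonneg β J i j)
  have hA_lt (i j : V) : A i j < 1 := one_sub_mul_agreement_lt J hβ i j
  have hlog (e : V × V) : Real.log (partitionFn S β (J + Pi.single e 1)) =
      Real.log (partitionFn S β J) + Real.log (1 - A e.1 e.2) := by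
    rw [← Real.log_mul (partitionFn_pos β J).ne' (sub_pos.2 (hA_lt e.1 e.2)).ne',
      partitionFn_add_single]
    rfl
  have hpos : 0 ≤ ∑ i, ∑ j, (m (i, j) - m' (i, j)) * -Real.log (1 - A i j) :=
    sum_sum_mul_nonneg_of_posSemidef hm <| posSemidef_map_neg_log_one_sub
      ((agreement_posSemidef β J).smul (one_sub_exp_neg_mem_Ico hβ).1) fun i j =>
        (abs_of_nonneg (hA_nonneg i j)).trans_lt (hA_lt i j)
  have hdiff : ∑ e, (m e - m' e) * -Real.log (1 - A e.1 e.2) =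
      ∑ e, m' e * Real.log (1 - A e.1 e.2) - ∑ e, m e * Real.log (1 - A e.1 e.2) := by
    rw [← Finset.sum_sub_distrib]
    exact Finset.sum_congr rfl fun e _ => by ring
  rw [← Fintype.sum_prod_type', hdiff] at hpos
  simp only [addPoint_apply, hlog, mul_add, Finset.sum_add_distrib, ← Finset.sum_mul, hsum]
  linarith

end Agreement

section Disorder

/-- The disorder average `𝔼 log Z(βJ)` for the mean-field model on `V` with spins in `S`. -/
noncomputable def freeEnergy (V S : Type*) [Fintype V] [DecidableEq V] [Fintype S] [DecidableEq S]
    (β c : ℝ) : ℝ :=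
  ∑' J : V × V → ℕ, poissonWeight (meanField V c) J * Real.log (partitionFn S β J)

variable [Nonempty S] {β c : ℝ}

lemma hasPoissonExp_log_partitionFn_decoupled {m : V × V → ℝ} {m' : W × W → ℝ} {a b : ℝ}
    (hm : 0 ≤ m) (hm' : 0 ≤ m') (ha : HasPoissonExp m (fun J => Real.log (partitionFn S β J)) a)
    (hb : HasPoissonExp m' (fun J => Real.log (partitionFn S β J)) b) :
    HasPoissonExp (decoupled m m') (fun J => Real.log (partitionFn S β J)) (a + b) := by
  have hdec := decoupled_nonneg hm hm'
  have hV := HasPoissonExp.comp_injective (m := decoupled m m') hdec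
    (Sum.inl_injective.prodMap Sum.inl_injective) ha
  have hW := HasPoissonExp.comp_injective (m := decoupled m m') hdec
    (Sum.inr_injective.prodMap Sum.inr_injective) hb
  refine (hV.add hW).congr_of_support fun J hJ => ?_
  rw [partitionFn_sum (fun v w => hJ _ rfl) (fun w v => hJ _ rfl),
    Real.log_mul (partitionFn_pos _ _).ne' (partitionFn_pos _ _).ne']

lemma hasPoissonExp_freeEnergy (hβ : 0 ≤ β) (hc : 0 ≤ c) :
    HasPoissonExp (meanField V c) (fun J => Real.log (partitionFn S β J)) (freeEnergy V S β c) := by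
  obtain ⟨_, ha⟩ := exists_hasPoissonExp_of_abs_le (meanField_nonneg (V := V) hc)
    fun J => abs_log_partitionFn_le (S := S) J hβ
  exact ha.summable.hasSum

lemma freeEnergy_congr (f : V ≃ W) (hβ : 0 ≤ β) (hc : 0 ≤ c) :
    freeEnergy V S β c = freeEnergy W S β c := by
  have hm : meanField V c = meanField W c ∘ f.prodCongr f := by
    ext e
    simp [meanField, Fintype.card_congr f]
  have hV : HasPoissonExp (meanField W c ∘ f.prodCongr f) _ _ :=
    hm ▸ hasPoissonExp_freeEnergy (V := V) (S := S) hβ hc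
  have hW := hV.comp_equiv
  simp only [partitionFn_comp_equiv] at hW
  exact hW.unique (hasPoissonExp_freeEnergy hβ hc)

lemma freeEnergy_add_le [Nonempty V] [Nonempty W] (hβ : 0 ≤ β) (hc : 0 ≤ c) :
    freeEnergy V S β c + freeEnergy W S β c ≤ freeEnergy (V ⊕ W) S β c := by
  have hV := meanField_nonneg (V := V) hc
  have hW := meanField_nonneg (V := W) hc
  have hsum : ∑ e, decoupled (meanField V c) (meanField W c) e = ∑ e, meanField (V ⊕ W) c e := by
    rw [sum_decoupled, sum_meanField, sum_meanField, sum_meanField, Fintype.card_sum]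
    push_cast
    ring
  exact HasPoissonExp.le_of_addPoint_le (decoupled_nonneg hV hW) (meanField_nonneg hc) hsum
    (addPoint_log_partitionFn_le hβ hsum (decoupled_sub_meanField_posSemidef hc))
    (hasPoissonExp_log_partitionFn_decoupled hV hW (hasPoissonExp_freeEnergy hβ hc)
      (hasPoissonExp_freeEnergy hβ hc))
    (hasPoissonExp_freeEnergy hβ hc)

end Disorder

section Annealed

variable [Nonempty S] {β c : ℝ}

lemma exists_hasPoissonExp_partitionFn_div_le (hβ : 0 ≤ β) (hc : 0 ≤ c) :
    ∃ a ≤ (Fintype.card S : ℝ) ^ Fintype.card V, HasPoissonExp (meanField V c)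
      (fun J => partitionFn S β J / annealedFactor S β ^ ∑ e, J e) a := by
  have hr := annealedFactor_pos S hβ
  have hexp (σ : V → S) :
      ∑ e, meanField V c e * (edgeFactor β σ e / annealedFactor S β - 1) ≤ 0 := by
    simp only [meanField, ← Finset.mul_sum, Finset.sum_sub_distrib, ← Finset.sum_div]
    refine mul_nonpos_of_nonneg_of_nonpos (by positivity) (sub_nonpos.2 ?_)
    rw [div_le_iff₀ hr]
    simpa [sq] using sum_edgeFactor_le hβ σ
  have hZ := HasPoissonExp.finset_sum fun σ (_ : σ ∈ Finset.univ) =>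
    hasPoissonExp_gibbsWeight_div (β := β) (meanField_nonneg (V := V) hc) hr.le (σ : V → S)
  simp only [← Finset.sum_div] at hZ
  refine ⟨_, ?_, hZ⟩
  simpa using Finset.sum_le_card_nsmul Finset.univ _ 1 fun σ _ => Real.exp_le_one_iff.2 (hexp σ)

lemma freeEnergy_le (hβ : 0 ≤ β) (hc : 0 ≤ c) : freeEnergy V S β c ≤ Fintype.card V *
    (Real.log (Fintype.card S) + c / 2 * Real.log (annealedFactor S β)) := by
  have hr := annealedFactor_pos S hβ
  let s : ℝ := Fintype.card S ^ Fintype.card V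
  have hs : 0 < s := pow_pos (Nat.cast_pos.2 Fintype.card_pos) _
  obtain ⟨a, ha, hZ⟩ := exists_hasPoissonExp_partitionFn_div_le (V := V) (S := S) hβ hc
  have hlog (J : V × V → ℕ) : Real.log (partitionFn S β J) ≤ (Real.log s - 1) +
      Real.log (annealedFactor S β) * ∑ e, (J e : ℝ) +
        s⁻¹ * (partitionFn S β J / annealedFactor S β ^ ∑ e, J e) := by
    have hZ_pos := partitionFn_pos (S := S) β J
    have hr_pow := pow_pos hr (∑ e, J e)
    have hdiv := Real.log_le_sub_one_of_pos (div_pos (div_pos hZ_pos hr_pow) hs)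
    rw [Real.log_div (div_pos hZ_pos hr_pow).ne' hs.ne', Real.log_div hZ_pos.ne' hr_pow.ne',
      Real.log_pow, div_eq_inv_mul _ s] at hdiv
    push_cast at hdiv
    linarith
  have hbound := ((hasPoissonExp_const (meanField_nonneg hc) (Real.log s - 1)).add
    ((hasPoissonExp_sum (meanField_nonneg hc)).const_mul (Real.log (annealedFactor S β)))).add
    (hZ.const_mul s⁻¹)
  have hfree := (hasPoissonExp_freeEnergy hβ hc).mono (meanField_nonneg hc) hbound hlog
  have hone : s⁻¹ * a ≤ 1 := inv_mul_le_one_of_le₀ ha hs.le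
  rw [sum_meanField, Real.log_pow] at hfree
  linarith

end Annealed

end PartitionFunction

section Pressure

variable {q : ℕ} {β c : ℝ}

lemma exp_neg_H_eq_gibbsWeight {N : ℕ} (β : ℝ) (J : Fin N × Fin N → ℕ) (σ : Fin N → Fin q) :
    Real.exp (-H q N σ fun i j => β * (J (i, j) : ℝ)) = gibbsWeight β J σ := by
  rw [gibbsWeight, H, ← Fintype.sum_prod_type', ← Finset.sum_neg_distrib, Real.exp_sum]
  refine Finset.prod_congr rfl fun e _ => ?_
  by_cases h : σ e.1 = σ e.2
  · simp [edgeFactor, h, ← Real.exp_nat_mul, mul_comm]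
  · simp [edgeFactor, h]

lemma Z_eq_partitionFn {N : ℕ} (β : ℝ) (J : Fin N × Fin N → ℕ) :
    Z q N (fun i j => β * (J (i, j) : ℝ)) = partitionFn (Fin q) β J :=
  Finset.sum_congr rfl fun σ _ => exp_neg_H_eq_gibbsWeight β J σ

lemma mul_p_eq_freeEnergy {N : ℕ} (hN : N ≠ 0) :
    N * p q N β c = freeEnergy (Fin N) (Fin q) β c := by
  rw [p, pmat, E, freeEnergy, ← tsum_mul_left, ← (Equiv.curry _ _ _).tsum_eq]
  refine tsum_congr fun J => ?_
  rw [← Z_eq_partitionFn, poissonWeight, Fintype.prod_prod_type, mul_left_comm,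
    one_div, mul_inv_cancel_left₀ (Nat.cast_ne_zero.2 hN)]
  simp only [meanField, Fintype.card_fin]
  rfl

variable [NeZero q]

lemma mul_p_add_mul_p_le (hβ : 0 ≤ β) (hc : 0 ≤ c) (a b : ℕ) :
    a * p q a β c + b * p q b β c ≤ (a + b : ℕ) * p q (a + b) β c := by
  obtain rfl | ha := eq_or_ne a 0
  · simp
  obtain rfl | hb := eq_or_ne b 0
  · simp
  have := NeZero.mk ha
  have := NeZero.mk hb
  rw [mul_p_eq_freeEnergy ha, mul_p_eq_freeEnergy hb, mul_p_eq_freeEnergy (by omega),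
    ← freeEnergy_congr finSumFinEquiv hβ hc]
  exact freeEnergy_add_le hβ hc

lemma p_le_annealed (hβ : 0 ≤ β) (hc : 0 ≤ c) {N : ℕ} (hN : N ≠ 0) :
    p q N β c ≤ annealed q β c := by
  have hle := freeEnergy_le (V := Fin N) (S := Fin q) hβ hc
  rw [← mul_p_eq_freeEnergy hN, Fintype.card_fin, Fintype.card_fin] at hle
  have hannealed : annealed q β c = Real.log q + c / 2 * Real.log (annealedFactor (Fin q) β) := by
    rw [annealed, annealedFactor, Fintype.card_fin]
  rw [hannealed]
  exact le_of_mul_le_mul_left hle (by positivity)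

end Pressure

end potts

/-- the thermodynamic limit of the quenched pressure exists, equals
the supremum over system sizes, and is bounded by the annealed pressure. -/
theorem statement6 (q : ℕ) (hq : 2 ≤ q) (β c : ℝ) (hβ : 0 ≤ β) (hc : 0 ≤ c) :
    Filter.Tendsto (fun N => potts.p q N β c) Filter.atTop
        (nhds (⨆ N : ℕ, potts.p q (N + 1) β c)) ∧
    (⨆ N : ℕ, potts.p q (N + 1) β c) ≤ potts.annealed q β c := by
  have : NeZero q := ⟨by omega⟩
  have hle (N : ℕ) : potts.p q (N + 1) β c ≤ potts.annealed q β c :=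
    potts.p_le_annealed hβ hc N.succ_ne_zero
  exact ⟨tendsto_ciSup_of_mul_superadditive ⟨_, Set.forall_mem_range.2 hle⟩
    (potts.mul_p_add_mul_p_le hβ hc), ciSup_le hle⟩
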